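/- Let S be a smooth cubic surface in P^3 over a field K. If S contains a pair of skew K-lines, then H^0_S(K) = 0. In particular, if K is algebraically closed then H^0_S(K) = 0. -/

import Mathlib

/- Common framework: points, lines, intersection divisors, the secant-tangent span,
the groups `H_S(K)`, geometric notions over the algebraic closure, and topologies. -/

open MvPolynomial

noncomputable section

namespace CubicSurf

variable {K L : Type*} [Field K] [Field L] {n : ℕ}

/-- The set of `K`-rational points of the projective hypersurface `F = 0`. -/
def zeroSet (F : MvPolynomial (Fin n) K) : Set (Projectivization K (Fin n → K)) :=
  {P | eval P.rep F = 0}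

/-- The binary form obtained by restricting `F` to the line spanned by `u` and `v`,
via the parametrization `(s : t) ↦ s • u + t • v`. -/
def lineRestrict (F : MvPolynomial (Fin n) K) (u v : Fin n → K) : MvPolynomial (Fin 2) K :=
  aeval (fun i => C (u i) * X 0 + C (v i) * X 1) F

/-- A projective line: a 2-dimensional linear subspace of `K^n`. -/
def IsLine (W : Submodule K (Fin n → K)) : Prop := Module.finrank K W = 2

/-- The line `W` lies (geometrically) on the hypersurface `F = 0`. -/
def LineOnSurf (F : MvPolynomial (Fin n) K) (W : Submodule K (Fin n → K)) : Prop :=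
  ∀ u v : Fin n → K, u ∈ W → v ∈ W → lineRestrict F u v = 0

/-- The projective point `P` lies on the line `W`. -/
def OnLine (W : Submodule K (Fin n → K)) (P : Projectivization K (Fin n → K)) : Prop :=
  P.rep ∈ W

/-- The set of `K`-points of the line `W`. -/
def linePts (W : Submodule K (Fin n → K)) : Set (Projectivization K (Fin n → K)) :=
  {P | OnLine W P}

/-- `ℓ · S = P + Q + R`: the intersection divisor (with multiplicities) of the line `W`
with the hypersurface `F = 0` is `P + Q + R`. -/
def MeetsIn (F : MvPolynomial (Fin n) K) (W : Submodule K (Fin n → K))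
    (P Q R : Projectivization K (Fin n → K)) : Prop :=
  ∃ (u v : Fin n → K) (_ : u ∈ W) (_ : v ∈ W) (_ : LinearIndependent K ![u, v])
    (c : K) (l m : Fin 3 → K) (h : ∀ k, l k • u + m k • v ≠ 0),
      c ≠ 0 ∧
      lineRestrict F u v = C c * ∏ k : Fin 3, (C (m k) * X 0 - C (l k) * X 1) ∧
      Projectivization.mk K _ (h 0) = P ∧
      Projectivization.mk K _ (h 1) = Q ∧
      Projectivization.mk K _ (h 2) = R

/-- Membership in the span of a set of points under the secant/tangent process:
the smallest subset of `S(K)` containing `B` such that whenever `P`, `Q` are in it and a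
`K`-line `ℓ ⊄ S` satisfies `ℓ·S = P+Q+R` with `R ∈ S(K)`, then `R` is in it. -/
inductive SpanMem (F : MvPolynomial (Fin n) K) (B : Set (Projectivization K (Fin n → K))) :
    Projectivization K (Fin n → K) → Prop
  | base (P : Projectivization K (Fin n → K)) (hP : P ∈ B) : SpanMem F B P
  | secant (P Q R : Projectivization K (Fin n → K)) (W : Submodule K (Fin n → K))
      (hW : IsLine W) (hWS : ¬ LineOnSurf F W) (hP : SpanMem F B P) (hQ : SpanMem F B Q)
      (hR : R ∈ zeroSet F) (hm : MeetsIn F W P Q R) : SpanMem F B R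

/-- The span of a set of points under the secant/tangent process. -/
def Span (F : MvPolynomial (Fin n) K) (B : Set (Projectivization K (Fin n → K))) :
    Set (Projectivization K (Fin n → K)) :=
  {P | SpanMem F B P}

/-- Smoothness of the projective hypersurface `F = 0`: over the algebraic closure there is
no nonzero common zero of `F` and all of its partial derivatives. -/
def IsSmoothHypersurf (F : MvPolynomial (Fin n) K) : Prop :=
  ∀ v : Fin n → AlgebraicClosure K,
    eval v (MvPolynomial.map (algebraMap K (AlgebraicClosure K)) F) = 0 →
    (∀ i, eval v (pderiv i (MvPolynomial.map (algebraMap K (AlgebraicClosure K)) F)) = 0) →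
    v = 0

/-- A smooth cubic hypersurface. -/
def SmoothCubic (F : MvPolynomial (Fin n) K) : Prop :=
  F.IsHomogeneous 3 ∧ IsSmoothHypersurf F

/-- The linear form cutting out the tangent plane `Π_P` of `F = 0` at `P`,
evaluated at the representative of a point `Q`; `Q ∈ Π_P` iff this vanishes. -/
def tangentEval (F : MvPolynomial (Fin n) K) (P Q : Projectivization K (Fin n → K)) : K :=
  ∑ i, eval P.rep (pderiv i F) * Q.rep i

/-- The set of `K`-points of the tangent plane `Π_P`. -/
def tangentPlanePts (F : MvPolynomial (Fin n) K) (P : Projectivization K (Fin n → K)) :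
    Set (Projectivization K (Fin n → K)) :=
  {Q | tangentEval F P Q = 0}

/-- The set of `K`-points of `Γ_P = S ∩ Π_P`. -/
def GammaPts (F : MvPolynomial (Fin n) K) (P : Projectivization K (Fin n → K)) :
    Set (Projectivization K (Fin n → K)) :=
  zeroSet F ∩ tangentPlanePts F P

/-! ### Base change along a field embedding -/

/-- Base change of a vector along a field embedding. -/
def clVec (φ : K →+* L) (v : Fin n → K) : Fin n → L := fun i => φ (v i)

lemma clVec_ne_zero (φ : K →+* L) {v : Fin n → K} (hv : v ≠ 0) : clVec φ v ≠ 0 := by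
  intro h
  apply hv
  funext i
  have := congrFun h i
  simpa [clVec] using φ.injective (by simpa [clVec] using this)

/-- Base change of a projective point along a field embedding. -/
def clPt (φ : K →+* L) (P : Projectivization K (Fin n → K)) :
    Projectivization L (Fin n → L) :=
  Projectivization.mk L (clVec φ P.rep) (clVec_ne_zero φ P.rep_nonzero)

lemma eval_smul_of_isHomogeneous {R : Type*} [CommSemiring R] {F : MvPolynomial (Fin n) R}
    {d : ℕ} (hF : F.IsHomogeneous d) (a : R) (w : Fin n → R) :
    eval (a • w) F = a ^ d * eval w F := by
  classical
  rw [eval_eq', eval_eq', Finset.mul_sum]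
  refine Finset.sum_congr rfl fun s hs => ?_
  have hdeg : ∑ i, s i = d := by
    have h1 := hF (MvPolynomial.mem_support_iff.mp hs)
    rw [Finsupp.weight_apply] at h1
    rw [← h1, Finsupp.sum_fintype]
    · simp
    · intro i; simp
  have key : ∀ i : Fin n, (a • w) i ^ s i = a ^ s i * w i ^ s i := by
    intro i; simp [mul_pow]
  rw [Finset.prod_congr rfl (fun i _ => key i), Finset.prod_mul_distrib,
    Finset.prod_pow_eq_pow_sum, hdeg]
  ring

lemma clVec_eval (φ : K →+* L) (F : MvPolynomial (Fin n) K) (v : Fin n → K) :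
    eval (clVec φ v) (MvPolynomial.map φ F) = φ (eval v F) := by
  rw [eval_map]
  have h : φ (eval v F) = φ (eval₂Hom (RingHom.id K) v F) := rfl
  rw [h, map_eval₂Hom]
  rfl

/-- A point given by a vector on which a homogeneous `F` vanishes lies in the zero set. -/
lemma mk_mem_zeroSet {F : MvPolynomial (Fin n) K} {d : ℕ} (hF : F.IsHomogeneous d)
    {v : Fin n → K} (hv : v ≠ 0) (h : eval v F = 0) :
    Projectivization.mk K v hv ∈ zeroSet F := by
  obtain ⟨a, ha⟩ := Projectivization.exists_smul_eq_mk_rep K v hv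
  show eval (Projectivization.mk K v hv).rep F = 0
  have hrep : (Projectivization.mk K v hv).rep = (a : K) • v := by
    rw [← ha, Units.smul_def]
  rw [hrep, eval_smul_of_isHomogeneous hF, h, mul_zero]

lemma clPt_mem_zeroSet (φ : K →+* L) {F : MvPolynomial (Fin n) K} {d : ℕ}
    (hF : F.IsHomogeneous d) {P : Projectivization K (Fin n → K)} (hP : P ∈ zeroSet F) :
    clPt φ P ∈ zeroSet (MvPolynomial.map φ F) := by
  apply mk_mem_zeroSet (hF.map φ)
  rw [clVec_eval, hP, map_zero]

/-- The induced map on points of `S` under base change of the field. -/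
def ptMap (φ : K →+* L) {F : MvPolynomial (Fin n) K} {d : ℕ} (hF : F.IsHomogeneous d)
    (P : zeroSet F) : zeroSet (MvPolynomial.map φ F) :=
  ⟨clPt φ P.1, clPt_mem_zeroSet φ hF P.2⟩

/-- A subspace of `L^n` is defined over `K` (w.r.t. `φ : K →+* L`) if it is spanned by
the base change of a `K`-subspace. -/
def DefinedOver (φ : K →+* L) (W : Submodule L (Fin n → L)) : Prop :=
  ∃ W₀ : Submodule K (Fin n → K), W = Submodule.span L (clVec φ '' (W₀ : Set (Fin n → K)))

/-! ### Asymptotic lines, parabolic points, Eckardt points -/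

/-- The line `W` is asymptotic to `F = 0` at `P`: the intersection multiplicity
`(ℓ · S)_P` is at least 3. -/
def AsymptoticAt (F : MvPolynomial (Fin n) K) (W : Submodule K (Fin n → K))
    (P : Projectivization K (Fin n → K)) : Prop :=
  IsLine W ∧ P.rep ∈ W ∧
    ∃ v ∈ W, LinearIndependent K ![P.rep, v] ∧
      ∃ c : K, lineRestrict F P.rep v = C c * (X 1) ^ 3

/-- The set of asymptotic lines at `P`. -/
def AsymSet (F : MvPolynomial (Fin n) K) (P : Projectivization K (Fin n → K)) :
    Set (Submodule K (Fin n → K)) :=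
  {W | AsymptoticAt F W P}

/-- A point of a hypersurface is parabolic (relative to the given field) if it does
not have exactly two distinct asymptotic lines (i.e. it has one or infinitely many). -/
def ParabolicAt (F : MvPolynomial (Fin n) K) (P : Projectivization K (Fin n → K)) : Prop :=
  ¬ ∃ W₁ W₂ : Submodule K (Fin n → K), W₁ ≠ W₂ ∧ AsymSet F P = {W₁, W₂}

/-- An Eckardt point (relative to the given field): three distinct lines lying on the
surface pass through `P`. -/
def EckardtAt (F : MvPolynomial (Fin n) K) (P : Projectivization K (Fin n → K)) : Prop :=
  ∃ W₁ W₂ W₃ : Submodule K (Fin n → K), W₁ ≠ W₂ ∧ W₁ ≠ W₃ ∧ W₂ ≠ W₃ ∧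
    (∀ W ∈ ({W₁, W₂, W₃} : Set (Submodule K (Fin n → K))),
      IsLine W ∧ LineOnSurf F W ∧ OnLine W P)

section geometric

variable (F : MvPolynomial (Fin n) K)

/-- `F` base changed to the algebraic closure of `K`. -/
def clF : MvPolynomial (Fin n) (AlgebraicClosure K) :=
  MvPolynomial.map (algebraMap K (AlgebraicClosure K)) F

/-- A `K`-point of `S` is parabolic (a geometric notion, checked over `K̄`). -/
def IsParabolic (P : Projectivization K (Fin n → K)) : Prop :=
  ParabolicAt (clF F) (clPt (algebraMap K (AlgebraicClosure K)) P)

/-- A `K`-point of `S` is an Eckardt point (a geometric notion, checked over `K̄`). -/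
def IsEckardt (P : Projectivization K (Fin n → K)) : Prop :=
  EckardtAt (clF F) (clPt (algebraMap K (AlgebraicClosure K)) P)

/-- A `K`-point of `S` is `K`-hyperbolic: it has exactly two asymptotic lines over `K̄`,
and both are defined over `K`. -/
def IsHyperbolic (P : Projectivization K (Fin n → K)) : Prop :=
  ∃ W₁ W₂, W₁ ≠ W₂ ∧
    AsymSet (clF F) (clPt (algebraMap K (AlgebraicClosure K)) P) = {W₁, W₂} ∧
    DefinedOver (algebraMap K (AlgebraicClosure K)) W₁ ∧
    DefinedOver (algebraMap K (AlgebraicClosure K)) W₂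

/-- A `K`-point of `S` is `K`-ternary: at least one of the asymptotic lines of `S`
through `P` is defined over `K`. -/
def IsTernary (P : Projectivization K (Fin n → K)) : Prop :=
  ∃ W ∈ AsymSet (clF F) (clPt (algebraMap K (AlgebraicClosure K)) P),
    DefinedOver (algebraMap K (AlgebraicClosure K)) W

end geometric

/-! ### The group `H_S(K)` -/

variable (F : MvPolynomial (Fin n) K)

/-- `G_S(K)`: the free abelian group on the set `S(K)`. -/
abbrev GS := FreeAbelianGroup (zeroSet F)

/-- The degree homomorphism `G_S(K) → ℤ`, `Σ aᵢ Pᵢ ↦ Σ aᵢ`. -/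
def degHom : GS F →+ ℤ := FreeAbelianGroup.lift fun _ => (1 : ℤ)

/-- `P + Q + R` is a "three point sum": either cut out on `S` with multiplicity by a
`K`-line not contained in `S`, or `P`, `Q`, `R` all lie on a `K`-line contained in `S`. -/
def TripleRel (P Q R : zeroSet F) : Prop :=
  ∃ W : Submodule K (Fin n → K), IsLine W ∧
    ((¬ LineOnSurf F W ∧ MeetsIn F W P.1 Q.1 R.1) ∨
      (LineOnSurf F W ∧ OnLine W P.1 ∧ OnLine W Q.1 ∧ OnLine W R.1))

/-- `G'_S(K)`: the subgroup generated by all three point sums. -/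
def Gp : AddSubgroup (GS F) :=
  AddSubgroup.closure {x | ∃ P Q R : zeroSet F, TripleRel F P Q R ∧
    x = FreeAbelianGroup.of P + FreeAbelianGroup.of Q + FreeAbelianGroup.of R}

/-- `G''_S(K)`: the degree-0 part of `G'_S(K)`. -/
def Gpp : AddSubgroup (GS F) := Gp F ⊓ (degHom F).ker

/-- `H_S(K) = G_S(K)/G''_S(K)`. -/
abbrev HS := GS F ⧸ Gpp F

/-- The class `[P] ∈ H_S(K)` of a point `P ∈ S(K)`. -/
def HClass (P : zeroSet F) : HS F := QuotientAddGroup.mk' (Gpp F) (FreeAbelianGroup.of P)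

/-- The degree homomorphism `H_S(K) → ℤ`. -/
def HdegHom : HS F →+ ℤ :=
  QuotientAddGroup.lift (Gpp F) (degHom F) (fun _ hx => hx.2)

/-- `H⁰_S(K)`: the degree-0 part of `H_S(K)`. -/
def H0 : AddSubgroup (HS F) := (HdegHom F).ker

@[simp] lemma HdegHom_HClass (P : zeroSet F) : HdegHom F (HClass F P) = 1 := by
  simp [HdegHom, HClass, degHom]

/-- The class `[P] - [Q]`, as an element of `H⁰_S(K)`. -/
def H0diff (P Q : zeroSet F) : H0 F :=
  ⟨HClass F P - HClass F Q, by simp [H0, AddMonoidHom.mem_ker, map_sub]⟩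

/-! ### mod-`p` dimensions and torsion -/

/-- `A/pA` for an abelian group `A`. -/
abbrev ModP (p : ℕ) (A : Type*) [AddCommGroup A] : Type _ :=
  A ⧸ (AddMonoidHom.range (nsmulAddMonoidHom p : A →+ A))

instance ModP.instModule (p : ℕ) (A : Type*) [AddCommGroup A] : Module (ZMod p) (ModP p A) :=
  QuotientAddGroup.zmodModule (fun x => ⟨x, rfl⟩)

/-- `dim_{F_p} A/pA`. -/
def dimModP (p : ℕ) (A : Type*) [AddCommGroup A] : Cardinal := Module.rank (ZMod p) (ModP p A)

/-- The `k`-torsion subgroup `A[k]` of an abelian group `A`. -/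
def torsion (k : ℕ) (A : Type*) [AddCommGroup A] : AddSubgroup A :=
  (nsmulAddMonoidHom k : A →+ A).ker

instance torsion.instModule (k : ℕ) (A : Type*) [AddCommGroup A] :
    Module (ZMod k) (torsion k A) :=
  AddCommGroup.zmodModule (fun x => Subtype.ext x.2)

/-- `dim_{F_k} A[k]`: the dimension of the `k`-torsion subgroup (for `k` prime). -/
def dimTorsion (k : ℕ) (A : Type*) [AddCommGroup A] : Cardinal :=
  Module.rank (ZMod k) (torsion k A)

/-! ### Topologies -/

/-- The quotient topology on projective space induced by the topology of `K`. -/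
def projTop (K : Type*) [Field K] [TopologicalSpace K] (n : ℕ) :
    TopologicalSpace (Projectivization K (Fin n → K)) :=
  TopologicalSpace.coinduced
    (fun v : {v : Fin n → K // v ≠ 0} => Projectivization.mk K v.1 v.2) inferInstance

/-- The induced topology on the set of `K`-points of `S`. -/
def surfTop (F : MvPolynomial (Fin n) K) [TopologicalSpace K] :
    TopologicalSpace (zeroSet F) :=
  TopologicalSpace.induced Subtype.val (projTop K n)

/-- `K` (a topological field) is a local field: it is isomorphic, as a topological field,
to `ℝ`, to `ℂ`, or to a finite extension of `ℚ_p` for some prime `p` (with its canonical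
topology, namely the `ℚ_p`-vector space topology). -/
def IsLocalField (K : Type*) [Field K] [TopologicalSpace K] : Prop :=
  (∃ e : K ≃+* ℝ, IsHomeomorph e) ∨ (∃ e : K ≃+* ℂ, IsHomeomorph e) ∨
    (∃ (p : ℕ), p.Prime ∧ ∃ (_ : Fact p.Prime) (f : ℚ_[p] →+* K) (m : ℕ)
      (e : K ≃+ (Fin m → ℚ_[p])),
      (∀ (c : ℚ_[p]) (x : K), e (f c * x) = c • e x) ∧ IsHomeomorph e)

end CubicSurf

/-!
All three point sums have the same class in `H_S(K)`. So if `3P` is a three point sum, because a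
line through `P` lies on `S` or is asymptotic there, then every point `Q` of `S` in the tangent
plane `Π_P` has the class of `P`, since `2P + Q` is a three point sum as well.

Given two linear subspaces on `S` that span the whole space, this identifies the class of a point
`P` of the first with that of a point of the second lying in `Π_P`. Points of one subspace share
their class, and any other point of `S` is collinear with a point of each.

Over an algebraically closed field, every point `P` has an asymptotic line, given by a zero of a
quadratic form on `Π_P`, and `Π_P ∩ Π_Q` contains a line, which meets `S`.
-/

namespace CubicSurf

variable {K : Type*} [Field K] {n : ℕ}

section differential

/-- The differential `dF_u : v ↦ ∑ i, ∂F/∂xᵢ(u) * vᵢ`. For a cubic form `F` and `F(u) = 0`, its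
kernel is the tangent space at `u`. -/
def differential (F : MvPolynomial (Fin n) K) (u : Fin n → K) : Module.Dual K (Fin n → K) :=
  ∑ i, eval u (pderiv i F) • LinearMap.proj i

/-- The first polar `∑ i, uᵢ * ∂F/∂xᵢ` of `F` with respect to `u`: the differential `dF_v(u)` as a
polynomial in `v`. -/
def polar (F : MvPolynomial (Fin n) K) (u : Fin n → K) : MvPolynomial (Fin n) K :=
  ∑ i, C (u i) * pderiv i F

lemma differential_apply (F : MvPolynomial (Fin n) K) (u v : Fin n → K) :
    differential F u v = ∑ i, eval u (pderiv i F) * v i := by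
  simp [differential]

lemma differential_rep_rep (F : MvPolynomial (Fin n) K)
    (P Q : Projectivization K (Fin n → K)) :
    differential F P.rep Q.rep = tangentEval F P Q :=
  differential_apply F P.rep Q.rep

lemma differential_add (F G : MvPolynomial (Fin n) K) (u : Fin n → K) :
    differential (F + G) u = differential F u + differential G u := by
  simp [differential, add_smul, Finset.sum_add_distrib]

lemma differential_smul (a : K) (F : MvPolynomial (Fin n) K) (u : Fin n → K) :
    differential (a • F) u = a • differential F u := by
  simp [differential, mul_smul, Finset.smul_sum]

lemma differential_mul (F G : MvPolynomial (Fin n) K) (u : Fin n → K) :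
    differential (F * G) u = eval u F • differential G u + eval u G • differential F u := by
  simp [differential, add_smul, mul_smul, Finset.sum_add_distrib, Finset.smul_sum]

lemma differential_X (i : Fin n) (u : Fin n → K) :
    differential (X i) u = LinearMap.proj i := by
  ext v
  simp [differential, pderiv_X, Pi.single_apply]

lemma eval_polar (F : MvPolynomial (Fin n) K) (u v : Fin n → K) :
    eval v (polar F u) = differential F v u := by
  simp [polar, differential_apply, mul_comm]

lemma isHomogeneous_polar {F : MvPolynomial (Fin n) K} {d : ℕ} (hF : F.IsHomogeneous d)
    (u : Fin n → K) : (polar F u).IsHomogeneous (d - 1) :=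
  IsHomogeneous.sum _ _ _ fun i _ => by
    simpa using (isHomogeneous_C (Fin n) (u i)).mul hF.pderiv

end differential

section lineRestrict

open scoped Pointwise in
lemma homogeneousSubmodule_three_eq_span :
    homogeneousSubmodule (Fin n) K 3 =
      Submodule.span K {G | ∃ i j k, X i * X j * X k = G} := by
  rw [← homogeneousSubmodule_one_pow, homogeneousSubmodule_one_eq_span_X, Submodule.span_pow]
  congr 1
  ext G
  simp [pow_succ, Set.mem_mul]

lemma lineRestrict_of_isHomogeneous_three {F : MvPolynomial (Fin n) K} (hF : F.IsHomogeneous 3)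
    (u v : Fin n → K) :
    lineRestrict F u v = C (eval u F) * X 0 ^ 3 + C (differential F u v) * (X 0 ^ 2 * X 1)
      + C (differential F v u) * (X 0 * X 1 ^ 2) + C (eval v F) * X 1 ^ 3 := by
  rw [← mem_homogeneousSubmodule, homogeneousSubmodule_three_eq_span] at hF
  induction hF using Submodule.span_induction with
  | mem G hG =>
    obtain ⟨i, j, k, rfl⟩ := hG
    simp only [lineRestrict, map_mul, aeval_X, eval_X, differential_mul, differential_X,
      LinearMap.add_apply, LinearMap.smul_apply, LinearMap.coe_proj, Function.eval, smul_eq_mul,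
      C_add]
    ring
  | zero => simp [lineRestrict, differential]
  | add G H _ _ hG hH =>
    rw [lineRestrict, map_add, ← lineRestrict, ← lineRestrict, hG, hH]
    simp only [differential_add, LinearMap.add_apply, map_add]
    ring
  | smul a G _ hG =>
    rw [lineRestrict, map_smul, ← lineRestrict, hG]
    simp only [differential_smul, LinearMap.smul_apply, smul_eval, smul_eq_mul, C_mul]
    rw [smul_eq_C_mul]
    ring

lemma eval_lineRestrict (F : MvPolynomial (Fin n) K) (u v : Fin n → K) (a b : K) :
    eval ![a, b] (lineRestrict F u v) = eval (a • u + b • v) F := by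
  simp only [lineRestrict, ← coe_aeval_eq_eval, RingHom.coe_coe]
  rw [← AlgHom.comp_apply, comp_aeval]
  congr 2
  funext i
  simp [mul_comm]

lemma lineRestrict_linear_combination (F : MvPolynomial (Fin n) K) (u v : Fin n → K)
    (a b c d : K) :
    lineRestrict F (a • u + b • v) (c • u + d • v) =
      aeval (![C a * X 0 + C c * X 1, C b * X 0 + C d * X 1] : Fin 2 → MvPolynomial (Fin 2) K)
        (lineRestrict F u v) := by
  unfold lineRestrict
  rw [← AlgHom.comp_apply, comp_aeval]
  congr 2
  funext i
  simp only [Pi.add_apply, Pi.smul_apply, smul_eq_mul, map_add, map_mul, aeval_X, algHom_C,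
    algebraMap_eq, Matrix.cons_val]
  ring

lemma lineOnSurf_span_pair {F : MvPolynomial (Fin n) K} {u v : Fin n → K}
    (h : lineRestrict F u v = 0) : LineOnSurf F (Submodule.span K {u, v}) := by
  intro p q hp hq
  obtain ⟨a, b, rfl⟩ := Submodule.mem_span_pair.1 hp
  obtain ⟨c, d, rfl⟩ := Submodule.mem_span_pair.1 hq
  rw [lineRestrict_linear_combination, h, map_zero]

lemma LineOnSurf.mono {F : MvPolynomial (Fin n) K} {V W : Submodule K (Fin n → K)}
    (hW : LineOnSurf F W) (hVW : V ≤ W) : LineOnSurf F V :=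
  fun u v hu hv => hW u v (hVW hu) (hVW hv)

lemma LineOnSurf.eval_eq_zero {F : MvPolynomial (Fin n) K} {W : Submodule K (Fin n → K)}
    (hW : LineOnSurf F W) {u : Fin n → K} (hu : u ∈ W) : eval u F = 0 := by
  simpa [hW u u hu hu] using (eval_lineRestrict F u u 1 0).symm

end lineRestrict

section linearAlgebra

lemma isLine_span_pair {u v : Fin n → K} (h : LinearIndependent K ![u, v]) :
    IsLine (Submodule.span K {u, v}) := by
  have := finrank_span_eq_card h
  rwa [Matrix.range_cons_cons_empty, Fintype.card_fin] at this

lemma onLine_mk_iff {W : Submodule K (Fin n → K)} {v : Fin n → K} (hv : v ≠ 0) :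
    OnLine W (Projectivization.mk K v hv) ↔ v ∈ W := by
  obtain ⟨a, ha⟩ := Projectivization.exists_smul_eq_mk_rep K v hv
  rw [OnLine, ← ha, W.smul_mem_iff']

lemma IsLine.sup_eq_top {W₁ W₂ : Submodule K (Fin 4 → K)} (h₁ : IsLine W₁) (h₂ : IsLine W₂)
    (hW : W₁ ⊓ W₂ = ⊥) : W₁ ⊔ W₂ = ⊤ := by
  apply Submodule.eq_top_of_finrank_eq
  have := Submodule.finrank_sup_add_finrank_inf_eq W₁ W₂
  rw [hW, finrank_bot, h₁, h₂] at this
  rw [Module.finrank_fin_fun]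
  exact this

variable {V : Type*} [AddCommGroup V] [Module K V]

lemma exists_mem_linearIndependent_pair {W : Submodule K V} (hW : 2 ≤ Module.finrank K W)
    {u : V} (hu : u ∈ W) (hu0 : u ≠ 0) : ∃ v ∈ W, LinearIndependent K ![u, v] := by
  obtain ⟨v, hv⟩ := exists_linearIndependent_pair_of_one_lt_finrank (R := K) hW
    (x := ⟨u, hu⟩) (Subtype.coe_ne_coe.1 hu0)
  refine ⟨v, v.2, ?_⟩
  rw [LinearIndependent.pair_iff] at hv ⊢
  simpa [Subtype.ext_iff] using hv

variable [FiniteDimensional K V]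

lemma finrank_le_finrank_inf_ker_add_one (W : Submodule K V) (f : Module.Dual K V) :
    Module.finrank K W ≤ Module.finrank K (W ⊓ LinearMap.ker f : Submodule K V) + 1 := by
  have h_ker : Module.finrank K (LinearMap.ker (f.domRestrict W)) =
      Module.finrank K (W ⊓ LinearMap.ker f : Submodule K V) := by
    rw [LinearMap.domRestrict, LinearMap.ker_comp, ← Submodule.finrank_map_subtype_eq,
      Submodule.map_comap_subtype]
  have h_range := Submodule.finrank_le (LinearMap.range (f.domRestrict W))
  rw [Module.finrank_self] at h_range
  rw [← (f.domRestrict W).finrank_range_add_finrank_ker, h_ker]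
  lia

lemma finrank_le_finrank_ker_inf_ker_add_two (f g : Module.Dual K V) :
    Module.finrank K V ≤
      Module.finrank K (LinearMap.ker f ⊓ LinearMap.ker g : Submodule K V) + 2 := by
  have hf := finrank_le_finrank_inf_ker_add_one ⊤ f
  have hg := finrank_le_finrank_inf_ker_add_one (LinearMap.ker f) g
  rw [finrank_top, top_inf_eq] at hf
  lia

end linearAlgebra

section tripleRel

variable {F : MvPolynomial (Fin n) K}

lemma eval_rep (P : zeroSet F) : eval P.1.rep F = 0 :=
  P.2

lemma linearIndependent_rep_pair {P Q : zeroSet F} (hPQ : P ≠ Q) :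
    LinearIndependent K ![P.1.rep, Q.1.rep] :=
  Projectivization.linearIndependent_pair_iff_ne.2 (Subtype.coe_ne_coe.2 hPQ)

lemma tripleRel_of_lineOnSurf {W : Submodule K (Fin n → K)} (hW : LineOnSurf F W)
    {u v : Fin n → K} (huv : LinearIndependent K ![u, v]) (hu : u ∈ W) (hv : v ∈ W)
    {P Q R : zeroSet F} (hP : P.1.rep ∈ Submodule.span K {u, v})
    (hQ : Q.1.rep ∈ Submodule.span K {u, v}) (hR : R.1.rep ∈ Submodule.span K {u, v}) :
    TripleRel F P Q R :=
  ⟨Submodule.span K {u, v}, isLine_span_pair huv,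
    Or.inr ⟨hW.mono (Submodule.span_le.2 (Set.pair_subset hu hv)), hP, hQ, hR⟩⟩

lemma tripleRel_of_lineRestrict_eq {P : Fin 3 → zeroSet F} {u v : Fin n → K}
    (huv : LinearIndependent K ![u, v]) {c : K} {l m : Fin 3 → K}
    (hP : ∀ k, (P k).1.rep = l k • u + m k • v)
    (h : lineRestrict F u v = C c * ∏ k, (C (m k) * X 0 - C (l k) * X 1)) :
    TripleRel F (P 0) (P 1) (P 2) := by
  have hu : u ∈ Submodule.span K {u, v} := Submodule.mem_span_of_mem (by simp)
  have hv : v ∈ Submodule.span K {u, v} := Submodule.mem_span_of_mem (by simp)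
  have hP_mem (k) : (P k).1.rep ∈ Submodule.span K {u, v} :=
    Submodule.mem_span_pair.2 ⟨l k, m k, (hP k).symm⟩
  by_cases h_surf : LineOnSurf F (Submodule.span K {u, v})
  · exact tripleRel_of_lineOnSurf h_surf huv hu hv (hP_mem 0) (hP_mem 1) (hP_mem 2)
  have hc : c ≠ 0 := by
    rintro rfl
    exact h_surf (lineOnSurf_span_pair (by rw [h, C_0, zero_mul]))
  have hP_ne (k) : l k • u + m k • v ≠ 0 := hP k ▸ (P k).1.rep_nonzero
  have hP_mk (k) : Projectivization.mk K _ (hP_ne k) = (P k).1 := by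
    simp_rw [← hP, Projectivization.mk_rep]
  exact ⟨_, isLine_span_pair huv, Or.inl ⟨h_surf, u, v, hu, hv, huv, c, l, m, hP_ne, hc, h,
    hP_mk 0, hP_mk 1, hP_mk 2⟩⟩

lemma mem_GammaPts_iff {P Q : zeroSet F} :
    Q.1 ∈ GammaPts F P.1 ↔ OnLine (LinearMap.ker (differential F P.1.rep)) Q.1 := by
  rw [OnLine, LinearMap.mem_ker, differential_rep_rep]
  exact and_iff_right Q.2

lemma tripleRel_of_mem_GammaPts (hF : F.IsHomogeneous 3) {P Q : zeroSet F} (hPQ : P ≠ Q)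
    (hQ : Q.1 ∈ GammaPts F P.1) : TripleRel F P P Q := by
  have hQ_tangent : differential F P.1.rep Q.1.rep = 0 := mem_GammaPts_iff.1 hQ
  refine tripleRel_of_lineRestrict_eq (P := ![P, P, Q]) (linearIndependent_rep_pair hPQ)
    (c := differential F Q.1.rep P.1.rep) (l := ![1, 1, 0]) (m := ![0, 0, 1])
    (by simp [Fin.forall_fin_succ]) ?_
  rw [lineRestrict_of_isHomogeneous_three hF, hQ_tangent, eval_rep P,
    eval_rep Q]
  simp only [Fin.prod_univ_three, Matrix.cons_val, C_0, C_1]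
  ring

lemma asymptoticAt_span_pair (hF : F.IsHomogeneous 3) {P : zeroSet F} {v : Fin n → K}
    (hPv : LinearIndependent K ![P.1.rep, v]) (h_tangent : differential F P.1.rep v = 0)
    (h_polar : eval v (polar F P.1.rep) = 0) :
    AsymptoticAt F (Submodule.span K {P.1.rep, v}) P.1 := by
  refine ⟨isLine_span_pair hPv, Submodule.mem_span_of_mem (by simp), v,
    Submodule.mem_span_of_mem (by simp), hPv, eval v F, ?_⟩
  rw [lineRestrict_of_isHomogeneous_three hF, h_tangent, ← eval_polar, h_polar, eval_rep]
  simp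

lemma tripleRel_self_of_asymptoticAt {P : zeroSet F} {W : Submodule K (Fin n → K)}
    (h : AsymptoticAt F W P.1) : TripleRel F P P P := by
  obtain ⟨-, -, v, -, hPv, c, hc⟩ := h
  refine tripleRel_of_lineRestrict_eq (P := ![P, P, P]) hPv (c := -c)
    (l := ![1, 1, 1]) (m := ![0, 0, 0]) (by simp [Fin.forall_fin_succ]) ?_
  rw [hc]
  simp only [Fin.prod_univ_three, Matrix.cons_val, C_0, C_1, C_neg]
  ring

lemma mul_differential_add_mul_differential_eq_zero (hF : F.IsHomogeneous 3) {u v : Fin n → K}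
    (hu : eval u F = 0) (hv : eval v F = 0) {a b : K} (ha : a ≠ 0) (hb : b ≠ 0)
    (h : eval (a • u + b • v) F = 0) : a * differential F u v + b * differential F v u = 0 := by
  rw [← eval_lineRestrict, lineRestrict_of_isHomogeneous_three hF, hu, hv] at h
  have h_prod : a * b * (a * differential F u v + b * differential F v u) = 0 := by
    simp only [C_0, map_add, map_mul, map_pow, eval_C, eval_X, Matrix.cons_val, zero_mul, zero_add,
      add_zero] at h
    linear_combination h
  exact (mul_eq_zero.1 h_prod).resolve_left (mul_ne_zero ha hb)

lemma tripleRel_of_collinear (hF : F.IsHomogeneous 3) {P Q R : zeroSet F} (hPQ : P ≠ Q)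
    (hPR : P ≠ R) (hQR : Q ≠ R) (hR : R.1.rep ∈ Submodule.span K {P.1.rep, Q.1.rep}) :
    TripleRel F P Q R := by
  have h_PR := (LinearIndependent.pair_iff' P.1.rep_nonzero).1 (linearIndependent_rep_pair hPR)
  have h_QR := (LinearIndependent.pair_iff' Q.1.rep_nonzero).1 (linearIndependent_rep_pair hQR)
  obtain ⟨a, b, hab⟩ := Submodule.mem_span_pair.1 hR
  have ha : a ≠ 0 := fun h => h_QR b (by simpa [h] using hab)
  have hb : b ≠ 0 := fun h => h_PR a (by simpa [h] using hab)
  have h_rel := mul_differential_add_mul_differential_eq_zero hF (eval_rep P) (eval_rep Q) ha hb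
    (hab ▸ eval_rep R)
  obtain ⟨c, hc⟩ : ∃ c, differential F Q.1.rep P.1.rep = c * a :=
    ⟨_, (div_mul_cancel₀ _ ha).symm⟩
  have hc' : differential F P.1.rep Q.1.rep = -(c * b) :=
    mul_left_cancel₀ ha (by linear_combination h_rel - b * hc)
  refine tripleRel_of_lineRestrict_eq (P := ![P, Q, R]) (linearIndependent_rep_pair hPQ) (c := c)
    (l := ![1, 0, a]) (m := ![0, 1, b]) (by simp [Fin.forall_fin_succ, hab]) ?_
  rw [lineRestrict_of_isHomogeneous_three hF, eval_rep P, eval_rep Q, hc, hc']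
  simp only [Fin.prod_univ_three, Matrix.cons_val, C_0, C_1, C_neg, C_mul]
  ring

end tripleRel

section classGroup

variable {F : MvPolynomial (Fin n) K}

lemma HClass_add_add_eq {P Q R P' Q' R' : zeroSet F}
    (h : TripleRel F P Q R) (h' : TripleRel F P' Q' R') :
    HClass F P + HClass F Q + HClass F R = HClass F P' + HClass F Q' + HClass F R' := by
  simp only [HClass, ← map_add]
  rw [← sub_eq_zero, ← map_sub, QuotientAddGroup.mk'_apply, QuotientAddGroup.eq_zero_iff]
  exact ⟨(Gp F).sub_mem (AddSubgroup.subset_closure ⟨P, Q, R, h, rfl⟩)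
    (AddSubgroup.subset_closure ⟨P', Q', R', h', rfl⟩), by simp [degHom]⟩

lemma HClass_eq_of_tripleRel {P Q R P' : zeroSet F} (h : TripleRel F P Q R)
    (hP' : TripleRel F P' P' P') (hP : HClass F P = HClass F P') (hQ : HClass F Q = HClass F P') :
    HClass F R = HClass F P' := by
  have h_sum := HClass_add_add_eq h hP'
  rw [hP, hQ] at h_sum
  exact add_left_cancel h_sum

lemma H0_eq_bot_of_forall_HClass_eq {c : HS F} (hc : ∀ P : zeroSet F, HClass F P = c) :
    H0 F = ⊥ := by
  have h_factor : QuotientAddGroup.mk' (Gpp F) = (zmultiplesHom _ c).comp (degHom F) := by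
    refine FreeAbelianGroup.lift_ext _ _ fun P => ?_
    simpa [degHom, HClass] using hc P
  refine eq_bot_iff.2 fun x hx => ?_
  obtain ⟨g, rfl⟩ := QuotientAddGroup.mk'_surjective (Gpp F) x
  have hg : degHom F g = 0 := hx
  simp [h_factor, hg]

lemma HClass_eq_of_mem_GammaPts (hF : F.IsHomogeneous 3) {P Q : zeroSet F}
    (hP : TripleRel F P P P) (hQ : Q.1 ∈ GammaPts F P.1) : HClass F Q = HClass F P := by
  rcases eq_or_ne P Q with rfl | hPQ
  · rfl
  · exact HClass_eq_of_tripleRel (tripleRel_of_mem_GammaPts hF hPQ hQ) hP rfl rfl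

lemma HClass_eq_of_lineOnSurf {W : Submodule K (Fin n → K)} (hW : LineOnSurf F W)
    {P Q : zeroSet F} (hP : OnLine W P.1) (hQ : OnLine W Q.1) : HClass F P = HClass F Q := by
  rcases eq_or_ne P Q with rfl | hPQ
  · rfl
  have h_li : LinearIndependent K ![P.1.rep, Q.1.rep] :=
    linearIndependent_rep_pair hPQ
  have hP_mem : P.1.rep ∈ Submodule.span K {P.1.rep, Q.1.rep} := Submodule.mem_span_of_mem (by simp)
  have hQ_mem : Q.1.rep ∈ Submodule.span K {P.1.rep, Q.1.rep} := Submodule.mem_span_of_mem (by simp)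
  exact HClass_eq_of_tripleRel
    (tripleRel_of_lineOnSurf hW h_li hP hQ hQ_mem hQ_mem hP_mem)
    (tripleRel_of_lineOnSurf hW h_li hP hQ hQ_mem hQ_mem hQ_mem) rfl rfl

end classGroup

section skew

variable {F : MvPolynomial (Fin n) K}

lemma LineOnSurf.exists_onLine {W : Submodule K (Fin n → K)} (hF : F.IsHomogeneous 3)
    (hW : LineOnSurf F W) (hW_ne : W ≠ ⊥) : ∃ P : zeroSet F, OnLine W P.1 := by
  obtain ⟨v, hv, hv0⟩ := W.ne_bot_iff.1 hW_ne
  exact ⟨⟨_, mk_mem_zeroSet hF hv0 (hW.eval_eq_zero hv)⟩, (onLine_mk_iff hv0).2 hv⟩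

lemma LineOnSurf.tripleRel_self {W : Submodule K (Fin n → K)} (hW : LineOnSurf F W)
    (hW_two : 2 ≤ Module.finrank K W) {P : zeroSet F} (hP : OnLine W P.1) :
    TripleRel F P P P := by
  obtain ⟨v, hv, hPv⟩ := exists_mem_linearIndependent_pair hW_two hP P.1.rep_nonzero
  have hP_mem : P.1.rep ∈ Submodule.span K {P.1.rep, v} :=
    Submodule.mem_span_of_mem (by simp)
  exact tripleRel_of_lineOnSurf hW hPv hP hv hP_mem hP_mem hP_mem

lemma exists_tripleRel_of_sup_eq_top (hF : F.IsHomogeneous 3) {W₁ W₂ : Submodule K (Fin n → K)}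
    (h₁ : LineOnSurf F W₁) (h₂ : LineOnSurf F W₂) (h_sup : W₁ ⊔ W₂ = ⊤) {R : zeroSet F}
    (hR₁ : ¬ OnLine W₁ R.1) (hR₂ : ¬ OnLine W₂ R.1) :
    ∃ P Q : zeroSet F, OnLine W₁ P.1 ∧ OnLine W₂ Q.1 ∧ TripleRel F P Q R := by
  obtain ⟨p, hp, q, hq, hpq⟩ := Submodule.mem_sup.1 (h_sup ▸ Submodule.mem_top : R.1.rep ∈ W₁ ⊔ W₂)
  have hp0 : p ≠ 0 := by
    rintro rfl
    exact hR₂ (by rwa [OnLine, ← hpq, zero_add])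
  have hq0 : q ≠ 0 := by
    rintro rfl
    exact hR₁ (by rwa [OnLine, ← hpq, add_zero])
  let P : zeroSet F := ⟨_, mk_mem_zeroSet hF hp0 (h₁.eval_eq_zero hp)⟩
  let Q : zeroSet F := ⟨_, mk_mem_zeroSet hF hq0 (h₂.eval_eq_zero hq)⟩
  have hP : OnLine W₁ P.1 := (onLine_mk_iff hp0).2 hp
  have hQ : OnLine W₂ Q.1 := (onLine_mk_iff hq0).2 hq
  have hPR : P ≠ R := fun h => hR₁ (h ▸ hP)
  have hQR : Q ≠ R := fun h => hR₂ (h ▸ hQ)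
  have hR_mem {V : Submodule K (Fin n → K)} (hPV : OnLine V P.1) (hQV : OnLine V Q.1) :
      OnLine V R.1 := by
    rw [OnLine, ← hpq]
    exact add_mem ((onLine_mk_iff hp0).1 hPV) ((onLine_mk_iff hq0).1 hQV)
  have hPQ : P ≠ Q := fun h => hR₁ (hR_mem hP (h ▸ hP))
  exact ⟨P, Q, hP, hQ, tripleRel_of_collinear hF hPQ hPR hQR
    (hR_mem (Submodule.mem_span_of_mem (by simp)) (Submodule.mem_span_of_mem (by simp)))⟩

lemma H0_eq_bot_of_sup_eq_top (hF : F.IsHomogeneous 3) {W₁ W₂ : Submodule K (Fin n → K)}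
    (h₁ : LineOnSurf F W₁) (h₂ : LineOnSurf F W₂) (hd₁ : 2 ≤ Module.finrank K W₁)
    (hd₂ : 2 ≤ Module.finrank K W₂) (h_sup : W₁ ⊔ W₂ = ⊤) : H0 F = ⊥ := by
  obtain ⟨P, hP⟩ := h₁.exists_onLine hF (Submodule.one_le_finrank_iff.1 (by lia))
  have hPPP : TripleRel F P P P := h₁.tripleRel_self hd₁ hP
  have h_tangent := finrank_le_finrank_inf_ker_add_one W₂ (differential F P.1.rep)
  obtain ⟨Q, hQ⟩ := (h₂.mono inf_le_left).exists_onLine hF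
    (Submodule.one_le_finrank_iff.1 (by lia : 1 ≤ Module.finrank K
      (W₂ ⊓ LinearMap.ker (differential F P.1.rep) : Submodule K (Fin n → K))))
  have hQP : HClass F Q = HClass F P := HClass_eq_of_mem_GammaPts hF hPPP (mem_GammaPts_iff.2 hQ.2)
  have on_W₁ {R : zeroSet F} (hR : OnLine W₁ R.1) : HClass F R = HClass F P :=
    HClass_eq_of_lineOnSurf h₁ hR hP
  have on_W₂ {R : zeroSet F} (hR : OnLine W₂ R.1) : HClass F R = HClass F P :=
    (HClass_eq_of_lineOnSurf h₂ hR hQ.1).trans hQP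
  refine H0_eq_bot_of_forall_HClass_eq (c := HClass F P) fun R => ?_
  by_cases hR₁ : OnLine W₁ R.1
  · exact on_W₁ hR₁
  by_cases hR₂ : OnLine W₂ R.1
  · exact on_W₂ hR₂
  obtain ⟨A, B, hA, hB, hABR⟩ := exists_tripleRel_of_sup_eq_top hF h₁ h₂ h_sup hR₁ hR₂
  exact HClass_eq_of_tripleRel hABR hPPP (on_W₁ hA) (on_W₂ hB)

end skew

section isAlgClosed

/-- The restriction of `G` to the affine line `t ↦ p + t • q`, as a polynomial in `t`. -/
def affineRestrict (G : MvPolynomial (Fin n) K) (p q : Fin n → K) : Polynomial K :=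
  aeval (fun i => Polynomial.C (p i) + Polynomial.C (q i) * Polynomial.X) G

lemma eval_affineRestrict (G : MvPolynomial (Fin n) K) (p q : Fin n → K) (t : K) :
    (affineRestrict G p q).eval t = eval (p + t • q) G := by
  rw [affineRestrict, ← Polynomial.coe_aeval_eq_eval, ← AlgHom.comp_apply, comp_aeval,
    ← coe_aeval_eq_eval, RingHom.coe_coe]
  congr 2
  funext i
  simpa using mul_comm (q i) t

variable [IsAlgClosed K]

lemma exists_mem_ne_zero_eval_eq_zero {G : MvPolynomial (Fin n) K} {d : ℕ}
    (hG : G.IsHomogeneous d) (hd : d ≠ 0) {W : Submodule K (Fin n → K)}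
    (hW : 2 ≤ Module.finrank K W) : ∃ w ∈ W, w ≠ 0 ∧ eval w G = 0 := by
  by_contra! h_ne
  -- `G (p + t q)` has no root in `t`, hence is a constant `c`; homogeneity then gives
  -- `G (q + s p) = c s ^ d`, which vanishes at `s = 0`.
  obtain ⟨p, hp, hp0⟩ := W.ne_bot_iff.1 (Submodule.one_le_finrank_iff.1 (by lia))
  obtain ⟨q, hq, hpq⟩ := exists_mem_linearIndependent_pair hW hp hp0
  have hq0 : q ≠ 0 := hpq.ne_zero 1
  have h_line (t : K) : p + t • q ≠ 0 := fun h =>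
    one_ne_zero (LinearIndependent.pair_iff.1 hpq 1 t (by rwa [one_smul])).1
  have h_degree : (affineRestrict G p q).degree = 0 := by
    by_contra h
    obtain ⟨t, ht⟩ := IsAlgClosed.exists_root _ h
    rw [Polynomial.IsRoot, eval_affineRestrict] at ht
    exact h_ne _ (add_mem hp (W.smul_mem t hq)) (h_line t) ht
  obtain ⟨c, hc⟩ : ∃ c, affineRestrict G p q = Polynomial.C c :=
    ⟨_, Polynomial.eq_C_of_degree_eq_zero h_degree⟩
  have h_eval (s : K) (hs : s ≠ 0) :
      (affineRestrict G q p).eval s = Polynomial.eval s (Polynomial.C c * Polynomial.X ^ d) := by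
    calc (affineRestrict G q p).eval s
        = eval (s • (p + s⁻¹ • q)) G := by
          rw [eval_affineRestrict, smul_add, smul_inv_smul₀ hs, add_comm]
      _ = s ^ d * (affineRestrict G p q).eval s⁻¹ := by
          rw [eval_smul_of_isHomogeneous hG, eval_affineRestrict]
      _ = Polynomial.eval s (Polynomial.C c * Polynomial.X ^ d) := by
          rw [hc, Polynomial.eval_C, Polynomial.eval_C_mul, Polynomial.eval_X_pow, mul_comm]
  have h_eq : affineRestrict G q p = Polynomial.C c * Polynomial.X ^ d :=
    Polynomial.eq_of_infinite_eval_eq _ _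
      ((Set.finite_singleton 0).infinite_compl.mono h_eval)
  refine h_ne q hq hq0 ?_
  simpa [eval_affineRestrict, hd] using congrArg (Polynomial.eval 0) h_eq

lemma exists_onLine_of_isAlgClosed {F : MvPolynomial (Fin n) K} {d : ℕ}
    (hF : F.IsHomogeneous d) (hd : d ≠ 0) {W : Submodule K (Fin n → K)}
    (hW : 2 ≤ Module.finrank K W) : ∃ P : zeroSet F, OnLine W P.1 := by
  obtain ⟨w, hw, hw0, hFw⟩ := exists_mem_ne_zero_eval_eq_zero hF hd hW
  exact ⟨⟨_, mk_mem_zeroSet hF hw0 hFw⟩, (onLine_mk_iff hw0).2 hw⟩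

variable {F : MvPolynomial (Fin n) K}

lemma tripleRel_self_of_isAlgClosed (hn : 4 ≤ n) (hF : F.IsHomogeneous 3) (P : zeroSet F) :
    TripleRel F P P P := by
  obtain ⟨i, hi⟩ : ∃ i, P.1.rep i ≠ 0 := Function.ne_iff.1 P.1.rep_nonzero
  have h_finrank := finrank_le_finrank_ker_inf_ker_add_two (differential F P.1.rep)
    (LinearMap.proj i : Module.Dual K (Fin n → K))
  rw [Module.finrank_fin_fun] at h_finrank
  obtain ⟨v, ⟨hv_tangent, hvi⟩, hv0, hv_polar⟩ := exists_mem_ne_zero_eval_eq_zero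
    (isHomogeneous_polar hF P.1.rep) two_ne_zero
    (W := LinearMap.ker (differential F P.1.rep) ⊓ LinearMap.ker (LinearMap.proj i)) (by lia)
  refine tripleRel_self_of_asymptoticAt (asymptoticAt_span_pair hF ?_ hv_tangent hv_polar)
  refine (LinearIndependent.pair_iff' P.1.rep_nonzero).2 fun a ha => hv0 ?_
  have hai : a * P.1.rep i = 0 := (congrFun ha i).trans hvi
  rw [← ha, (mul_eq_zero.1 hai).resolve_right hi, zero_smul]

lemma H0_eq_bot_of_isAlgClosed (hn : 4 ≤ n) (hF : F.IsHomogeneous 3) : H0 F = ⊥ := by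
  have h_tangent {P R : zeroSet F} (hR : OnLine (LinearMap.ker (differential F P.1.rep)) R.1) :
      HClass F R = HClass F P :=
    HClass_eq_of_mem_GammaPts hF (tripleRel_self_of_isAlgClosed hn hF P) (mem_GammaPts_iff.2 hR)
  obtain ⟨P, -⟩ := exists_onLine_of_isAlgClosed hF three_ne_zero (W := ⊤)
    (by rw [finrank_top, Module.finrank_fin_fun]; lia)
  refine H0_eq_bot_of_forall_HClass_eq (c := HClass F P) fun Q => ?_
  have h_finrank := finrank_le_finrank_ker_inf_ker_add_two (differential F P.1.rep)
    (differential F Q.1.rep)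
  rw [Module.finrank_fin_fun] at h_finrank
  obtain ⟨R, hRP, hRQ⟩ := exists_onLine_of_isAlgClosed hF three_ne_zero
    (W := LinearMap.ker (differential F P.1.rep) ⊓ LinearMap.ker (differential F Q.1.rep)) (by lia)
  exact (h_tangent hRQ).symm.trans (h_tangent hRP)

end isAlgClosed

end CubicSurf

open CubicSurf MvPolynomial in
theorem H0_eq_bot_of_skew_lines_general
    {K : Type*} [Field K] {n : ℕ}
    (F : MvPolynomial (Fin n) K) (hF : F.IsHomogeneous 3) :
    ((∃ W₁ W₂ : Submodule K (Fin n → K),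
      2 ≤ Module.finrank K W₁ ∧ 2 ≤ Module.finrank K W₂ ∧
      LineOnSurf F W₁ ∧ LineOnSurf F W₂ ∧ W₁ ⊔ W₂ = ⊤) → H0 F = ⊥) ∧
    (4 ≤ n → IsAlgClosed K → H0 F = ⊥) :=
  ⟨fun ⟨_, _, hd₁, hd₂, h₁, h₂, h_sup⟩ => H0_eq_bot_of_sup_eq_top hF h₁ h₂ hd₁ hd₂ h_sup,
    fun hn _ => H0_eq_bot_of_isAlgClosed hn hF⟩

open CubicSurf MvPolynomial in
/-- Let `S` be a smooth cubic surface over a field `K`. If `S`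
contains a pair of skew `K`-lines then `H⁰_S(K) = 0`; in particular, if `K` is
algebraically closed then `H⁰_S(K) = 0`. -/
theorem H0_eq_bot_of_skew_lines
    {K : Type*} [Field K]
    (F : MvPolynomial (Fin 4) K) (hF : SmoothCubic F) :
    ((∃ W₁ W₂ : Submodule K (Fin 4 → K), IsLine W₁ ∧ IsLine W₂ ∧
      LineOnSurf F W₁ ∧ LineOnSurf F W₂ ∧ W₁ ⊓ W₂ = ⊥) → H0 F = ⊥) ∧
    (IsAlgClosed K → H0 F = ⊥) := by
  obtain ⟨h_skew, h_closed⟩ := H0_eq_bot_of_skew_lines_general F hF.1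
  exact ⟨fun ⟨W₁, W₂, l₁, l₂, h₁, h₂, hW⟩ =>
    h_skew ⟨W₁, W₂, l₁.ge, l₂.ge, h₁, h₂, l₁.sup_eq_top l₂ hW⟩, h_closed le_rfl⟩
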